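/- Let X be a real Banach space and let C, D ⊆ X be nonempty convex sets such that C is compact and D is simultaneously approximatively compact. Then C + D is simultaneously approximatively compact. -/

import Mathlib

/-!
A minimizing sequence in `C + D` for `A` has the form `c n + d n`, and by compactness of `C` it may
be assumed that `c n → c ∈ C`. Since `simSup A` is 1-Lipschitz (`simSup_le_add`), the sequence
`c + d n` is still minimizing for `A` in `C + D`. As `c + D ⊆ C + D`, this forces `d n` to be
minimizing in `D` for the translate `A - c`, so some subsequence of `d n` converges in `D`.
-/

open Filter Topology Pointwise

variable {X : Type*} [NormedAddCommGroup X] [NormedSpace ℝ X]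

/-- `simSup A y = sup_{a ∈ A} ‖a - y‖`. -/
noncomputable def simSup (A : Set X) (y : X) : ℝ := ⨆ a : A, ‖(a : X) - y‖

/-- `simDist A C = inf_{y ∈ C} sup_{a ∈ A} ‖a - y‖`. -/
noncomputable def simDist (A C : Set X) : ℝ := ⨅ y : C, simSup A (y : X)

/-- The set of best simultaneous approximations `P_C(A)`. -/
def simBest (A C : Set X) : Set X := {y | y ∈ C ∧ simSup A y = simDist A C}

/-- The set `P_C(A, δ)`. -/
def simBestApprox (A C : Set X) (δ : ℝ) : Set X :=
  {y | y ∈ C ∧ simSup A y < simDist A C + δ}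

/-- `C` is simultaneously proximinal. -/
def SimProximinal (C : Set X) : Prop :=
  ∀ A : Set X, A.Nonempty → Bornology.IsBounded A → (simBest A C).Nonempty

/-- `y` is a minimizing sequence in `C` for `A`. -/
def IsMinimizing (A C : Set X) (y : ℕ → X) : Prop :=
  (∀ n, y n ∈ C) ∧ Tendsto (fun n => simSup A (y n)) atTop (𝓝 (simDist A C))

/-- Weak convergence of a sequence. -/
def WeakTendsto (y : ℕ → X) (c : X) : Prop :=
  ∀ f : X →L[ℝ] ℝ, Tendsto (fun n => f (y n)) atTop (𝓝 (f c))

/-- `C` is simultaneously approximatively compact. -/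
def SimApproxCompact (C : Set X) : Prop :=
  ∀ A : Set X, A.Nonempty → Bornology.IsBounded A → ∀ y : ℕ → X, IsMinimizing A C y →
    ∃ c ∈ C, ∃ φ : ℕ → ℕ, StrictMono φ ∧ Tendsto (y ∘ φ) atTop (𝓝 c)

/-- `C` is simultaneously approximatively weakly compact. -/
def SimApproxWeakCompact (C : Set X) : Prop :=
  ∀ A : Set X, A.Nonempty → Bornology.IsBounded A → ∀ y : ℕ → X, IsMinimizing A C y →
    ∃ c ∈ C, ∃ φ : ℕ → ℕ, StrictMono φ ∧ WeakTendsto (y ∘ φ) c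

/-- `C` is simultaneously strongly proximinal. -/
def SimStronglyProximinal (C : Set X) : Prop :=
  SimProximinal C ∧ ∀ A : Set X, A.Nonempty → Bornology.IsBounded A → ∀ ε > (0 : ℝ),
    ∃ δ > (0 : ℝ), simBestApprox A C δ ⊆ simBest A C + Metric.closedBall (0 : X) ε

/-- `C` is simultaneously weakly strongly proximinal. -/
def SimWeakStronglyProximinal (C : Set X) : Prop :=
  SimProximinal C ∧ ∀ A : Set X, A.Nonempty → Bornology.IsBounded A →
    ∀ V : Set X, V ∈ 𝓝 (0 : WeakSpace ℝ X) → ∃ δ > (0 : ℝ),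
      simBestApprox A C δ ⊆ simBest A C + V

lemma simSup_bddAbove {A : Set X} (hA : Bornology.IsBounded A) (y : X) :
    BddAbove (Set.range fun a : A => ‖(a : X) - y‖) := by
  obtain ⟨R, hR⟩ := hA.exists_norm_le
  refine ⟨R + ‖y‖, ?_⟩
  rintro _ ⟨a, rfl⟩
  exact (norm_sub_le _ _).trans (by linarith [hR a a.2])

lemma simSup_nonneg (A : Set X) (y : X) : 0 ≤ simSup A y :=
  Real.iSup_nonneg fun _ => norm_nonneg _

lemma simSup_le_add {A : Set X} (hne : A.Nonempty) (hA : Bornology.IsBounded A) (y z : X) :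
    simSup A y ≤ simSup A z + ‖y - z‖ := by
  have : Nonempty A := hne.to_subtype
  refine ciSup_le fun a => ?_
  have h1 : ‖(a : X) - z‖ ≤ simSup A z := le_ciSup (simSup_bddAbove hA z) a
  have h2 : (a : X) - y = (a - z) - (y - z) := by abel
  rw [h2]
  exact (norm_sub_le _ _).trans (by linarith)

lemma simDist_le {A C : Set X} {y : X} (hy : y ∈ C) : simDist A C ≤ simSup A y :=
  ciInf_le (f := fun y : C => simSup A (y : X))
    ⟨0, by rintro _ ⟨z, rfl⟩; exact simSup_nonneg A z⟩ ⟨y, hy⟩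

lemma simSup_image_sub (A : Set X) (c d : X) :
    simSup ((fun a => a - c) '' A) d = simSup A (c + d) := by
  unfold simSup
  rw [← sSup_image' (f := fun x => ‖x - d‖), ← sSup_image' (f := fun x => ‖x - (c + d)‖),
    Set.image_image]
  simp only [sub_sub]

/-- The sum of a compact convex set and a simultaneously approximatively compact convex set is
simultaneously approximatively compact. -/
theorem compact_add_simApproxCompact [CompleteSpace X]
    (C D : Set X) (hCne : C.Nonempty) (hDne : D.Nonempty)
    (hCc : Convex ℝ C) (hDc : Convex ℝ D)
    (hC : IsCompact C) (hD : SimApproxCompact D) :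
    SimApproxCompact (C + D) := by
  intro A hAne hA y ⟨hyCD, hy⟩
  choose c hc d hd hcd using fun n => Set.mem_add.1 (hyCD n)
  obtain ⟨c₀, hc₀, φ, hφ, hcφ⟩ := hC.tendsto_subseq hc
  have hBne : ((fun a => a - c₀) '' A).Nonempty := hAne.image _
  have hB : Bornology.IsBounded ((fun a => a - c₀) '' A) := by
    simpa only [Set.sub_singleton] using hA.sub (Bornology.isBounded_singleton (x := c₀))
  have hlim : Tendsto (fun n => simSup A (c₀ + d (φ n))) atTop (𝓝 (simDist A (C + D))) := by
    have h0 : Tendsto (fun n => ‖c₀ - c (φ n)‖) atTop (𝓝 0) := by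
      simpa using (tendsto_const_nhds (x := c₀)).sub hcφ |>.norm
    have h1 := (hy.comp hφ.tendsto_atTop).add h0
    rw [add_zero] at h1
    refine tendsto_of_tendsto_of_tendsto_of_le_of_le tendsto_const_nhds h1
      (fun n => simDist_le (Set.add_mem_add hc₀ (hd _))) fun n => ?_
    have h2 := simSup_le_add hAne hA (c₀ + d (φ n)) (y (φ n))
    rwa [← hcd, add_sub_add_right_eq_sub, hcd] at h2
  have hdist : simDist ((fun a => a - c₀) '' A) D = simDist A (C + D) := by
    apply le_antisymm
    · refine ge_of_tendsto' hlim fun n => ?_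
      rw [← simSup_image_sub]
      exact simDist_le (hd _)
    · have : Nonempty D := hDne.to_subtype
      refine le_ciInf fun e => ?_
      rw [simSup_image_sub]
      exact simDist_le (Set.add_mem_add hc₀ e.2)
  obtain ⟨d₀, hd₀, ψ, hψ, hdψ⟩ := hD _ hBne hB (d ∘ φ)
    ⟨fun n => hd _, by simpa only [hdist, simSup_image_sub, Function.comp] using hlim⟩
  refine ⟨c₀ + d₀, Set.add_mem_add hc₀ hd₀, φ ∘ ψ, hφ.comp hψ, ?_⟩
  refine ((hcφ.comp hψ.tendsto_atTop).add hdψ).congr fun n => ?_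
  exact hcd _
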